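/- (Error Bound on Aggregation) Assume that for all x ∈ 𝒜 and i ∈ {1,…,n}, d_{xi} > 0 implies φ_{ix} > 0. Let ε = max_{x∈𝒜} max_{ i,j : φ_{ix}>0, φ_{jx}>0 } |J*(i) − J*(j)|, and let J̃(i) = Σ_{x∈𝒜} φ_{ix} r*_x. Then |J*(i) − J̃(i)| ≤ ε/(1−α) for every state i = 1,…,n. -/

import Mathlib

/-!
Averaging against probability weights is nonexpansive in the sup norm, so the composition `ΦDT` of
the Bellman operator `T` with disaggregation `D` and aggregation `Φ` is still an `α`-contraction,
and `J̃ = Φ r*` is its fixed point. The a posteriori estimate for contractions bounds `J* - J̃` by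
`‖J* - ΦDT J*‖ / (1 - α)`. Since `T J* = J*`, the numerator is `‖J* - ΦD J*‖`, in which `J* i` is
compared only with values `J* j` at states `j` sharing an aggregate state with `i`.
-/

section Averaging

variable {ι : Type*} [Fintype ι] {w : ι → ℝ}

open Matrix

theorem sum_smul_mem_of_mem_stdSimplex {E : Type*} [AddCommGroup E] [Module ℝ E] {s : Set E}
    (hs : Convex ℝ s) (hw : w ∈ stdSimplex ℝ ι) {z : ι → E} (hz : ∀ i, 0 < w i → z i ∈ s) :
    ∑ i, w i • z i ∈ s := by
  rw [← finsum_eq_sum_of_fintype]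
  refine hs.finsum_mem hw.1 ?_ fun i hi => hz i ((hw.1 i).lt_of_ne' hi)
  rw [finsum_eq_sum_of_fintype, hw.2]

theorem abs_sub_dotProduct_le_of_mem_stdSimplex (hw : w ∈ stdSimplex ℝ ι) {f : ι → ℝ} {c B : ℝ}
    (h : ∀ i, 0 < w i → |c - f i| ≤ B) : |c - w ⬝ᵥ f| ≤ B := by
  have hmem : w ⬝ᵥ f ∈ Metric.closedBall c B :=
    sum_smul_mem_of_mem_stdSimplex (convex_closedBall c B) hw fun i hi =>
      Metric.mem_closedBall'.2 (h i hi)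
  exact Metric.mem_closedBall'.1 hmem

theorem dist_dotProduct_le_of_mem_stdSimplex (hw : w ∈ stdSimplex ℝ ι) (f f' : ι → ℝ) :
    dist (w ⬝ᵥ f) (w ⬝ᵥ f') ≤ dist f f' := by
  have hdiff : |0 - w ⬝ᵥ (f - f')| ≤ dist f f' :=
    abs_sub_dotProduct_le_of_mem_stdSimplex hw fun i _ => by
      simpa only [zero_sub, abs_neg, Pi.sub_apply, Real.dist_eq] using dist_le_pi_dist f f' i
  simpa only [zero_sub, abs_neg, dotProduct_sub, Real.dist_eq] using hdiff

theorem lipschitzWith_one_mulVec_of_mem_stdSimplex {κ : Type*} [Fintype κ] {M : Matrix κ ι ℝ}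
    (hM : ∀ k, M k ∈ stdSimplex ℝ ι) : LipschitzWith 1 (M *ᵥ ·) :=
  LipschitzWith.mk_one fun f f' =>
    (dist_pi_le_iff dist_nonneg).2 fun k => dist_dotProduct_le_of_mem_stdSimplex (hM k) f f'

end Averaging

theorem abs_inf'_sub_inf'_le {ι G : Type*} [AddCommGroup G] [LinearOrder G] [IsOrderedAddMonoid G]
    {s : Finset ι} (hs : s.Nonempty) {f f' : ι → G} {B : G} (h : ∀ i ∈ s, |f i - f' i| ≤ B) :
    |s.inf' hs f - s.inf' hs f'| ≤ B := by
  have inf'_le_inf'_add {f f' : ι → G} (h : ∀ i ∈ s, |f i - f' i| ≤ B) :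
      s.inf' hs f ≤ B + s.inf' hs f' := by
    obtain ⟨i, hi, hmin⟩ := s.exists_mem_eq_inf' hs f'
    rw [hmin]
    exact (s.inf'_le f hi).trans (sub_le_iff_le_add.1 (abs_sub_le_iff.1 (h i hi)).1)
  exact abs_sub_le_iff.2 ⟨sub_le_iff_le_add.2 (inf'_le_inf'_add h),
    sub_le_iff_le_add.2 (inf'_le_inf'_add fun i hi => abs_sub_comm (f i) (f' i) ▸ h i hi)⟩

section Bellman

variable {S C : Type*} [Fintype S] {U : S → Finset C} {p : S → C → S → ℝ}

open Matrix NNReal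

/-- The Bellman operator `T` of the Markov decision problem with control constraint sets `U`,
transition probabilities `p`, stage costs `g` and discount factor `α`; its fixed point is the
optimal cost vector. The transition probabilities enter as arbitrary real weights. -/
noncomputable def bellmanOperator (U : S → Finset C) (hU : ∀ i, (U i).Nonempty)
    (p g : S → C → S → ℝ) (α : ℝ) (J : S → ℝ) (i : S) : ℝ :=
  (U i).inf' (hU i) fun u => ∑ j, p i u j * (g i u j + α * J j)

theorem lipschitzWith_bellmanOperator (hU : ∀ i, (U i).Nonempty)
    (hp : ∀ i, ∀ u ∈ U i, p i u ∈ stdSimplex ℝ S) (g : S → C → S → ℝ) (α : ℝ≥0) :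
    LipschitzWith α (bellmanOperator U hU p g α) := by
  refine LipschitzWith.of_dist_le_mul fun J J' =>
    (dist_pi_le_iff (by positivity)).2 fun i => abs_inf'_sub_inf'_le (hU i) fun u hu => ?_
  calc dist (p i u ⬝ᵥ (g i u + (α : ℝ) • J)) (p i u ⬝ᵥ (g i u + (α : ℝ) • J'))
      ≤ dist (g i u + (α : ℝ) • J) (g i u + (α : ℝ) • J') :=
        dist_dotProduct_le_of_mem_stdSimplex (hp i u hu) _ _
    _ = α * dist J J' := by rw [dist_add_left, dist_smul₀, Real.norm_of_nonneg α.coe_nonneg]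

end Bellman

section Aggregation

variable {S A : Type*} [Fintype S] [Fintype A] {D : Matrix A S ℝ} {Φ : Matrix S A ℝ}
  {J : S → ℝ} {ε : ℝ}

open Matrix NNReal Function

theorem abs_sub_mulVec_mulVec_le (hD : ∀ x, D x ∈ stdSimplex ℝ S)
    (hΦ : ∀ i, Φ i ∈ stdSimplex ℝ A)
    (hε : ∀ x i j, 0 < Φ i x → 0 < D x j → |J i - J j| ≤ ε) (i : S) :
    |J i - (Φ *ᵥ (D *ᵥ J)) i| ≤ ε :=
  abs_sub_dotProduct_le_of_mem_stdSimplex (hΦ i) fun x hx =>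
    abs_sub_dotProduct_le_of_mem_stdSimplex (hD x) fun j hj => hε x i j hx hj

theorem contractingWith_mulVec_mulVec {K : ℝ≥0} {T : (S → ℝ) → S → ℝ} (hT : ContractingWith K T)
    (hD : ∀ x, D x ∈ stdSimplex ℝ S) (hΦ : ∀ i, Φ i ∈ stdSimplex ℝ A) :
    ContractingWith K fun J => Φ *ᵥ (D *ᵥ T J) := by
  have hlip := (lipschitzWith_one_mulVec_of_mem_stdSimplex hΦ).comp
    ((lipschitzWith_one_mulVec_of_mem_stdSimplex hD).comp hT.2)
  rw [one_mul, one_mul] at hlip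
  exact ⟨hT.1, hlip⟩

theorem aggregation_error_bound_general {K : ℝ≥0} {T : (S → ℝ) → S → ℝ}
    (hT : ContractingWith K T) (hD : ∀ x, D x ∈ stdSimplex ℝ S) (hΦ : ∀ i, Φ i ∈ stdSimplex ℝ A)
    (hJ : IsFixedPt T J) {r : A → ℝ} (hr : IsFixedPt (fun r => D *ᵥ T (Φ *ᵥ r)) r)
    (hε : ∀ x i j, 0 < Φ i x → 0 < D x j → |J i - J j| ≤ ε) (i : S) :
    |J i - (Φ *ᵥ r) i| ≤ ε / (1 - K) := by
  have : Nonempty S := ⟨i⟩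
  have hcontr : ContractingWith K fun J => Φ *ᵥ (D *ᵥ T J) :=
    contractingWith_mulVec_mulVec hT hD hΦ
  have hfixed : IsFixedPt (fun J => Φ *ᵥ (D *ᵥ T J)) (Φ *ᵥ r) := congrArg (Φ *ᵥ ·) hr
  have hresidual : dist J (Φ *ᵥ (D *ᵥ T J)) ≤ ε := by
    rw [hJ.eq]
    exact dist_pi_le_iff'.2 (abs_sub_mulVec_mulVec_le hD hΦ hε)
  calc |J i - (Φ *ᵥ r) i|
      ≤ dist J (Φ *ᵥ r) := dist_le_pi_dist J (Φ *ᵥ r) i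
    _ ≤ dist J (Φ *ᵥ (D *ᵥ T J)) / (1 - K) := hcontr.dist_le_of_fixedPoint J hfixed
    _ ≤ ε / (1 - K) := div_le_div_of_nonneg_right hresidual hcontr.one_sub_K_pos.le

end Aggregation

/-- Error bound on aggregation: under the support condition
`d_{xi} > 0 ⟹ φ_{ix} > 0`, the aggregation approximation
`J̃(i) = Σ_x φ_{ix} r*_x` satisfies `|J*(i) − J̃(i)| ≤ ε/(1−α)`, where
`ε = max_{x} max_{i,j : φ_{ix}>0, φ_{jx}>0} |J*(i) − J*(j)|`. -/
theorem aggregation_error_bound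
    (n : ℕ) [NeZero n] (C A : Type) [Fintype A] [Nonempty A]
    (U : Fin n → Finset C) (hU : ∀ i, (U i).Nonempty)
    (α : ℝ) (hα0 : 0 < α) (hα1 : α < 1)
    (p g : Fin n → C → Fin n → ℝ)
    (hp : ∀ i, ∀ u ∈ U i, ∀ j, 0 ≤ p i u j)
    (hp1 : ∀ i, ∀ u ∈ U i, ∑ j, p i u j = 1)
    (d : A → Fin n → ℝ) (hd : ∀ x i, 0 ≤ d x i) (hd1 : ∀ x, ∑ i, d x i = 1)
    (φ : Fin n → A → ℝ) (hφ : ∀ j y, 0 ≤ φ j y) (hφ1 : ∀ j, ∑ y, φ j y = 1)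
    -- `J*` is the optimal cost vector of the original problem
    (Jstar : Fin n → ℝ)
    (hJstar : ∀ i, Jstar i = (U i).inf' (hU i)
      (fun u => ∑ j, p i u j * (g i u j + α * Jstar j)))
    -- `r*` is the (unique) fixed point of the aggregation operator `H`
    (rstar : A → ℝ)
    (hfix : ∀ x, rstar x = ∑ i, d x i * (U i).inf' (hU i)
      (fun u => ∑ j, p i u j * (g i u j + α * ∑ y, φ j y * rstar y)))
    -- the support condition
    (hcond : ∀ x i, 0 < d x i → 0 < φ i x)
    -- `ε = max_{x∈𝒜} max_{i,j : φ_{ix}>0, φ_{jx}>0} |J*(i) − J*(j)|`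
    (ε : ℝ)
    (hε : ε = Finset.univ.sup' Finset.univ_nonempty
      (fun q : A × Fin n × Fin n =>
        if 0 < φ q.2.1 q.1 ∧ 0 < φ q.2.2 q.1 then |Jstar q.2.1 - Jstar q.2.2| else 0))
    -- the aggregation approximation `J̃`
    (Jtilde : Fin n → ℝ)
    (hJtilde : ∀ i, Jtilde i = ∑ x, φ i x * rstar x) :
    ∀ i, |Jstar i - Jtilde i| ≤ ε / (1 - α) := by
  have hε_le (x : A) (i j : Fin n) (hi : 0 < φ i x) (hj : 0 < d x j) : |Jstar i - Jstar j| ≤ ε := by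
    have hle := hε ▸ Finset.le_sup' (fun q : A × Fin n × Fin n =>
      if 0 < φ q.2.1 q.1 ∧ 0 < φ q.2.2 q.1 then |Jstar q.2.1 - Jstar q.2.2| else 0)
      (Finset.mem_univ (x, i, j))
    rwa [if_pos ⟨hi, hcond x j hj⟩] at hle
  lift α to NNReal using hα0.le
  have hT : ContractingWith α (bellmanOperator U hU p g α) :=
    ⟨hα1, lipschitzWith_bellmanOperator hU (fun i u hu => ⟨hp i u hu, hp1 i u hu⟩) g α⟩
  intro i
  rw [hJtilde i]
  exact aggregation_error_bound_general (D := Matrix.of d) (Φ := Matrix.of φ) hT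
    (fun x => ⟨hd x, hd1 x⟩) (fun j => ⟨hφ j, hφ1 j⟩) (funext fun j => (hJstar j).symm)
    (funext fun x => (hfix x).symm) hε_le i
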